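/- arXiv:2306.03698 — 2 statements merged into one kernel-verified Lean document; each statement's English description precedes it below -/
import Mathlib

section
/- For every 0 ≤ L ≤ ∞, the set N_L^1 of real-valued MPNN feature functions is dense (with respect to the supremum norm) in C(M_L, ℝ), and the set NN_L^1 of real-valued graph-level MPNN functions is dense in C(P(M_L), ℝ), where P(M_L) is the compact space of Borel probability measures on M_L with the weak topology. -/
open MeasureTheory Set

noncomputable section

/-- Borel measures of total mass at most one on `X`. -/
abbrev SubProb (X : Type) [MeasurableSpace X] : Type :=
  {μ : Measure X // μ Set.univ ≤ 1}

/-- The weak topology on `SubProb X`: the coarsest topology making all maps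
`μ ↦ ∫ f dμ` for bounded continuous `f` continuous. -/
def subProbWeakTop (X : Type) [MeasurableSpace X] [TopologicalSpace X] :
    TopologicalSpace (SubProb X) :=
  ⨅ f : BoundedContinuousFunction X ℝ,
    TopologicalSpace.induced (fun μ => ∫ x, f x ∂μ.val) inferInstance

/-- Iterated degree measure spaces with their (weak) topologies:
`M 0` is a one-point space and `M (h+1)` is the space of Borel measures of total
mass at most one on `M h` with the weak topology. -/
def IDM : ℕ → Σ X : Type, TopologicalSpace X
  | 0 => ⟨Unit, inferInstance⟩
  | (h+1) =>
      let p := IDM h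
      ⟨@SubProb p.1 (@borel p.1 p.2), @subProbWeakTop p.1 (@borel p.1 p.2) p.2⟩

/-- The space of iterated degree measures of depth `h`. -/
def M (h : ℕ) : Type := (IDM h).1

instance (h : ℕ) : TopologicalSpace (M h) := (IDM h).2
instance (h : ℕ) : MeasurableSpace (M h) := borel (M h)
instance (h : ℕ) : BorelSpace (M h) := ⟨rfl⟩

def toSub {h : ℕ} (α : M (h+1)) : SubProb (M h) := α
def ofSub {h : ℕ} (μ : SubProb (M h)) : M (h+1) := μ
/-- The underlying measure of an iterated degree measure. -/
def toMeas {h : ℕ} (α : M (h+1)) : Measure (M h) := (toSub α).1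

/-- Borel probability measures on `X`. -/
abbrev ProbM (X : Type) [MeasurableSpace X] : Type :=
  {μ : Measure X // IsProbabilityMeasure μ}

/-- The weak topology on Borel probability measures. -/
def probWeakTop (X : Type) [MeasurableSpace X] [TopologicalSpace X] :
    TopologicalSpace (ProbM X) :=
  ⨅ f : BoundedContinuousFunction X ℝ,
    TopologicalSpace.induced (fun μ => ∫ x, f x ∂μ.val) inferInstance
/-- The projections `p_{h+1,h} : M (h+1) → M h`, given by pushforward. -/
def projM : (h : ℕ) → M (h+1) → M h
  | 0, _ => ()
  | (h+1), α => ofSub ⟨(toMeas α).map (projM h), by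
      by_cases hf : AEMeasurable (projM h) (toMeas α)
      · rw [Measure.map_apply_of_aemeasurable hf MeasurableSet.univ, Set.preimage_univ]
        exact (toSub α).2
      · rw [Measure.map_of_not_aemeasurable hf]
        simp⟩

/-- The inverse limit `M_∞` of the spaces `M h` along the projections,
with the subspace topology of the product topology. -/
abbrev Minf : Type := {α : (h : ℕ) → M h // ∀ h, projM h (α (h+1)) = α h}

instance : MeasurableSpace Minf := borel Minf
instance : BorelSpace Minf := ⟨rfl⟩
/-- An MPNN model: dimensions `d t`, an initial feature `φ₀ ∈ ℝ^{d 0}`, and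
continuous update functions `φ t : ℝ^{d t} → ℝ^{d (t+1)}`. An `L`-layer model uses
the layers `φ 0, …, φ (L-1)`. -/
structure MPNNModel where
  d : ℕ → ℕ
  φ₀ : EuclideanSpace ℝ (Fin (d 0))
  φ : (t : ℕ) → EuclideanSpace ℝ (Fin (d t)) → EuclideanSpace ℝ (Fin (d (t+1)))
  cont : ∀ t, Continuous (φ t)

/-- MPNN features on iterated degree measures: `h^{(0)}_α = φ₀` and
`h^{(t+1)}_α = φ_t (∫ h^{(t)}_β dα(β))`. -/
def idmFeat (m : MPNNModel) : (t : ℕ) → M t → EuclideanSpace ℝ (Fin (m.d t))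
  | 0, _ => m.φ₀
  | (t+1), α => m.φ t (∫ β, idmFeat m t β ∂(toMeas α))



/-- The set `{∫ h^{(t)}_β dα : α ∈ M (t+1)}` of attainable aggregated inputs of the
layer function `φ t`. -/
def aggSet (m : MPNNModel) (t : ℕ) : Set (EuclideanSpace ℝ (Fin (m.d t))) :=
  {z | ∃ α : M (t+1), z = ∫ β, idmFeat m t β ∂(toMeas α)}

/-- An `L`-layer MPNN model: each of the used layer functions is Lipschitz on its
compact set of attainable aggregated inputs. -/
def LipModel (m : MPNNModel) (L : ℕ) : Prop :=
  ∀ t, t < L → ∃ K : NNReal, LipschitzOnWith K (m.φ t) (aggSet m t)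


/-- The set `N_t^1` of real-valued MPNN feature functions on `M t`. -/
def NSet (t : ℕ) : Set (M t → ℝ) :=
  {f | ∃ m : MPNNModel, LipModel m t ∧ m.d t = 1 ∧
    f = fun α => ∑ i, idmFeat m t α i}

/-- The set `N_∞^1` of real-valued MPNN feature functions on `M = M_∞`. -/
def NSetInf : Set (Minf → ℝ) :=
  {f | ∃ (t : ℕ) (m : MPNNModel), LipModel m t ∧ m.d t = 1 ∧
    f = fun α => ∑ i, idmFeat m t (α.1 t) i}

instance (X : Type) [MeasurableSpace X] [TopologicalSpace X] :
    TopologicalSpace (ProbM X) := probWeakTop X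

/-- The set `NN_L^1` of real-valued graph-level MPNN functions on `P(M L)`. -/
def NNSet (L : ℕ) : Set (ProbM (M L) → ℝ) :=
  {F | ∃ (m : MPNNModel) (ψ : EuclideanSpace ℝ (Fin (m.d L)) → ℝ) (K : NNReal),
    LipModel m L ∧ LipschitzWith K ψ ∧
    F = fun ν => ψ (∫ β, idmFeat m L β ∂ν.1)}

/-- The set `NN_∞^1` of real-valued graph-level MPNN functions on `P(M)`. -/
def NNSetInf : Set (ProbM Minf → ℝ) :=
  {F | ∃ (t : ℕ) (m : MPNNModel) (ψ : EuclideanSpace ℝ (Fin (m.d t)) → ℝ) (K : NNReal),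
    LipModel m t ∧ LipschitzWith K ψ ∧
    F = fun ν => ψ (∫ β, idmFeat m t β ∂(ν.1.map fun a => a.1 t))}

/-!
Let `κ` be a weakly continuous injective family of sub-probability measures, indexed by a compact
space `Y`, on a compact metrizable space `X`. The `C¹` functions of finitely many integrals
`∫ f dκ_y` form an algebra of continuous functions on `Y`, and it separates points because a finite
measure is determined by its integrals of continuous functions; by Stone–Weierstrass it is dense.
Integration against a sub-probability measure is `1`-Lipschitz in the integrand, so the integrands
may be restricted to any uniformly dense set, while `C¹` maps are Lipschitz on the compact sets of
attainable integrals. Taking `Y = M (t + 1)` and `X = M t` this is the induction step on the depth,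
and taking for `Y` the probability measures on `X` it passes from features to graph-level functions.
On `M_∞`, the functions factoring through some `M t` are again a point-separating algebra.
-/

open TopologicalSpace

theorem exists_lipschitzWith_eqOn_of_contDiff {E : Type*} [NormedAddCommGroup E] [NormedSpace ℝ E]
    {f : E → ℝ} (hf : ContDiff ℝ 1 f) {s : Set E} (hs : IsCompact s) :
    ∃ (ψ : E → ℝ) (K : NNReal), LipschitzWith K ψ ∧ EqOn f ψ s := by
  obtain ⟨K, hK⟩ :=
    hf.locallyLipschitz.locallyLipschitzOn.exists_lipschitzOnWith_of_compact hs
  obtain ⟨ψ, hψ, heq⟩ := hK.extend_real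
  exact ⟨ψ, K, hψ, heq⟩

section VectorValued

variable {Y : Type*} [TopologicalSpace Y]

theorem dense_setOf_forall_coord_mem {ι : Type*} [Finite ι] {S : Set C(Y, ℝ)} (hS : Dense S) :
    Dense {G : C(Y, EuclideanSpace ℝ ι) | ∀ i, ∃ f ∈ S, ∀ y, G y i = f y} := by
  classical
  have := Fintype.ofFinite ι
  let assemble (f : ι → C(Y, ℝ)) : C(Y, EuclideanSpace ℝ ι) :=
    ∑ i, (⟨fun r => r • EuclideanSpace.single i 1, by fun_prop⟩ :
      C(ℝ, EuclideanSpace ℝ ι)).comp (f i)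
  have assemble_apply (f : ι → C(Y, ℝ)) (y : Y) (i : ι) : assemble f y i = f i y := by
    simp [assemble, Pi.single_apply]
  have continuous_assemble : Continuous assemble :=
    continuous_finsetSum _ fun i _ =>
      (ContinuousMap.continuous_postcomp _).comp (continuous_apply i)
  have surjective_assemble : Function.Surjective assemble := fun G =>
    ⟨fun i => ⟨fun y => G y i, by fun_prop⟩, by ext y i; simp [assemble_apply]⟩
  refine (surjective_assemble.denseRange.dense_image continuous_assemble
    (dense_pi univ fun _ _ => hS)).mono ?_
  rintro _ ⟨f, hf, rfl⟩ i
  exact ⟨f i, hf i (mem_univ i), fun y => assemble_apply f y i⟩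

theorem exists_mem_forall_abs_sub_coord_le [CompactSpace Y]
    {S : Set C(Y, EuclideanSpace ℝ (Fin 1))} (hS : Dense S) (F : C(Y, ℝ)) {ε : ℝ} (hε : 0 < ε) :
    ∃ G ∈ S, ∀ y, |F y - G y 0| ≤ ε := by
  let F' : C(Y, EuclideanSpace ℝ (Fin 1)) := ⟨fun y => WithLp.toLp 2 fun _ => F y, by fun_prop⟩
  obtain ⟨G, hGS, hG⟩ := hS.exists_dist_lt F' hε
  refine ⟨G, hGS, fun y => ?_⟩
  calc |F y - G y 0| = ‖(F' y - G y) 0‖ := by simp [F']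
    _ ≤ ‖F' y - G y‖ := PiLp.norm_apply_le _ 0
    _ = dist (F' y) (G y) := (dist_eq_norm _ _).symm
    _ ≤ dist F' G := ContinuousMap.dist_apply_le_dist y
    _ ≤ ε := hG.le

end VectorValued

/-- A weakly continuous family `y ↦ κ y` of Borel measures of total mass at most one on `X`.
It abstracts both the aggregation of messages (`Y = M (t + 1)`, `X = M t`) and the graph-level
readout (`Y` the space of probability measures on `X`). -/
structure SubProbKernel (Y X : Type*) [TopologicalSpace Y] [TopologicalSpace X]
    [MeasurableSpace X] where
  measure : Y → Measure X
  measure_univ_le_one : ∀ y, measure y univ ≤ 1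
  continuous_integral : ∀ f : C(X, ℝ), Continuous fun y => ∫ x, f x ∂(measure y)

namespace SubProbKernel

variable {X Y : Type*} [TopologicalSpace Y] [TopologicalSpace X] [MeasurableSpace X]

instance (κ : SubProbKernel Y X) (y : Y) : IsFiniteMeasure (κ.measure y) :=
  ⟨(κ.measure_univ_le_one y).trans_lt ENNReal.one_lt_top⟩

variable [BorelSpace X] [CompactSpace X] (κ : SubProbKernel Y X)

theorem integrable {E : Type*} [NormedAddCommGroup E] (g : C(X, E)) (y : Y) :
    Integrable g (κ.measure y) :=
  g.continuous.integrable_of_hasCompactSupport (HasCompactSupport.of_compactSpace g)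

section Aggregate

variable {E : Type*} [NormedAddCommGroup E] [NormedSpace ℝ E] [FiniteDimensional ℝ E]

theorem continuous_integral_of_finiteDimensional (g : C(X, E)) :
    Continuous fun y => ∫ x, g x ∂(κ.measure y) := by
  let e := ContinuousLinearEquiv.ofFinrankEq
    (Module.finrank_fin_fun ℝ (n := Module.finrank ℝ E)).symm
  rw [← e.comp_continuous_iff]
  refine continuous_pi fun i => ?_
  let coord : E →L[ℝ] ℝ := (ContinuousLinearMap.proj i).comp e.toContinuousLinearMap
  have integral_coord (y : Y) :
      ∫ x, coord (g x) ∂(κ.measure y) = e (∫ x, g x ∂(κ.measure y)) i :=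
    coord.integral_comp_comm (κ.integrable g y)
  simp only [Function.comp_apply, ← integral_coord]
  exact κ.continuous_integral ((coord : C(E, ℝ)).comp g)

/-- The aggregation map `g ↦ (y ↦ ∫ g dκ_y)`. -/
def aggregate (g : C(X, E)) : C(Y, E) :=
  ⟨fun y => ∫ x, g x ∂(κ.measure y), κ.continuous_integral_of_finiteDimensional g⟩

theorem aggregate_apply (g : C(X, E)) (y : Y) : κ.aggregate g y = ∫ x, g x ∂(κ.measure y) := rfl

theorem aggregate_coord {ι : Type*} [Fintype ι] (g : C(X, EuclideanSpace ℝ ι)) (y : Y) (i : ι) :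
    κ.aggregate g y i = ∫ x, g x i ∂(κ.measure y) :=
  eval_integral_piLp (fun j => κ.integrable ⟨fun x => g x j, by fun_prop⟩ y) i

theorem dist_aggregate_apply_le (g h : C(X, E)) (y : Y) :
    dist (κ.aggregate g y) (κ.aggregate h y) ≤ dist g h := by
  have mass_le_one : (κ.measure y).real univ ≤ 1 :=
    ENNReal.toReal_le_of_le_ofReal zero_le_one (by simpa using κ.measure_univ_le_one y)
  calc dist (κ.aggregate g y) (κ.aggregate h y)
      = ‖∫ x, (g x - h x) ∂(κ.measure y)‖ := by
        rw [dist_eq_norm, aggregate_apply, aggregate_apply,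
          integral_sub (κ.integrable g y) (κ.integrable h y)]
    _ ≤ dist g h * (κ.measure y).real univ :=
        norm_integral_le_of_norm_le_const <| .of_forall fun x =>
          (dist_eq_norm (g x) (h x)).symm.trans_le (ContinuousMap.dist_apply_le_dist x)
    _ ≤ dist g h := mul_le_of_le_one_right dist_nonneg mass_le_one

theorem continuous_aggregate [CompactSpace Y] :
    Continuous (κ.aggregate : C(X, E) → C(Y, E)) :=
  LipschitzWith.continuous (K := 1) <| LipschitzWith.of_dist_le_mul fun g h => by
    simpa using (ContinuousMap.dist_le dist_nonneg).2 (κ.dist_aggregate_apply_le g h)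

end Aggregate

/-- The algebra of continuously differentiable functions of finitely many integrals
`∫ f i dκ_y`. -/
def smoothReadouts : Subalgebra ℝ C(Y, ℝ) where
  carrier := {G | ∃ (ι : Type) (_ : Fintype ι) (f : ι → C(X, ℝ)) (P : (ι → ℝ) → ℝ),
    ContDiff ℝ 1 P ∧ ∀ y, G y = P fun i => κ.aggregate (f i) y}
  mul_mem' := by
    rintro G H ⟨ι, _, f, P, hP, hG⟩ ⟨ι', _, f', P', hP', hH⟩
    exact ⟨ι ⊕ ι', inferInstance, Sum.elim f f', fun z => P (z ∘ Sum.inl) * P' (z ∘ Sum.inr),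
      (hP.comp (by fun_prop)).mul (hP'.comp (by fun_prop)), fun y => by
        simp [hG, hH, Function.comp_def]⟩
  add_mem' := by
    rintro G H ⟨ι, _, f, P, hP, hG⟩ ⟨ι', _, f', P', hP', hH⟩
    exact ⟨ι ⊕ ι', inferInstance, Sum.elim f f', fun z => P (z ∘ Sum.inl) + P' (z ∘ Sum.inr),
      (hP.comp (by fun_prop)).add (hP'.comp (by fun_prop)), fun y => by
        simp [hG, hH, Function.comp_def]⟩
  algebraMap_mem' r := ⟨Empty, inferInstance, Empty.elim, fun _ => r, contDiff_const, fun _ => rfl⟩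

theorem exists_comp_aggregate_of_forall_coord_mem {k : ℕ} {G : C(Y, EuclideanSpace ℝ (Fin k))}
    (hG : ∀ i, ∃ f ∈ κ.smoothReadouts, ∀ y, G y i = f y) :
    ∃ (n : ℕ) (g : C(X, EuclideanSpace ℝ (Fin n)))
      (P : EuclideanSpace ℝ (Fin n) → EuclideanSpace ℝ (Fin k)),
      ContDiff ℝ 1 P ∧ ∀ y, G y = P (κ.aggregate g y) := by
  choose G' hG' hGG' using hG
  choose ι _ f P hP hGP using hG'
  let e := Fintype.equivFin (Σ i, ι i)
  let f' (p : Σ i, ι i) : C(X, ℝ) := f p.1 p.2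
  let g : C(X, EuclideanSpace ℝ (Fin _)) :=
    ⟨fun x => WithLp.toLp 2 fun j => f' (e.symm j) x, by fun_prop⟩
  have aggregate_g (y : Y) (i : Fin k) (j : ι i) :
      κ.aggregate g y (e ⟨i, j⟩) = κ.aggregate (f i j) y := by
    rw [aggregate_coord]
    simp only [g, ContinuousMap.coe_mk, Equiv.symm_apply_apply]
    rfl
  refine ⟨_, g, fun z => WithLp.toLp 2 fun i => P i fun j => z (e ⟨i, j⟩), ?_, fun y => ?_⟩
  · exact contDiff_euclidean.2 fun i => (hP i).comp (by fun_prop)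
  · ext i
    simp only [hGG', hGP, aggregate_g]

variable [MetrizableSpace X]

theorem eq_of_forall_aggregate_eq {y z : Y} (hκ : Function.Injective κ.measure)
    (h : ∀ f : C(X, ℝ), κ.aggregate f y = κ.aggregate f z) : y = z :=
  hκ <| ext_of_forall_integral_eq_of_IsFiniteMeasure fun f => h f.toContinuousMap

theorem smoothReadouts_separatesPoints (hκ : Function.Injective κ.measure) :
    κ.smoothReadouts.SeparatesPoints := by
  intro y z hyz
  by_contra! hagree
  refine hyz <| κ.eq_of_forall_aggregate_eq hκ fun f => ?_
  exact hagree _ ⟨κ.aggregate f,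
    ⟨Unit, inferInstance, fun _ => f, fun v => v (), by fun_prop, fun _ => rfl⟩, rfl⟩

variable [CompactSpace Y]

theorem metrizableSpace (hκ : Function.Injective κ.measure) : MetrizableSpace Y := by
  obtain ⟨u, hu⟩ := exists_dense_seq C(X, ℝ)
  refine Metric.PiNatEmbed.TopologicalSpace.MetrizableSpace.of_countable_separating
    (fun n => κ.aggregate (u n)) (fun n => (κ.aggregate (u n)).continuous) fun y z hyz => ?_
  by_contra! hagree
  have continuous_at (y : Y) : Continuous fun f : C(X, ℝ) => κ.aggregate f y :=
    (continuous_eval_const y).comp κ.continuous_aggregate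
  exact hyz <| κ.eq_of_forall_aggregate_eq hκ <| congrFun <|
    hu.equalizer (continuous_at y) (continuous_at z) (funext hagree)

theorem dense_setOf_comp_aggregate (hκ : Function.Injective κ.measure)
    {D : ∀ n, Set C(X, EuclideanSpace ℝ (Fin n))} (hD : ∀ n, Dense (D n)) (k : ℕ) :
    Dense {G : C(Y, EuclideanSpace ℝ (Fin k)) | ∃ n, ∃ g ∈ D n,
      ∃ P : EuclideanSpace ℝ (Fin n) → EuclideanSpace ℝ (Fin k),
        ContDiff ℝ 1 P ∧ ∀ y, G y = P (κ.aggregate g y)} := by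
  have dense_readouts : Dense (κ.smoothReadouts : Set C(Y, ℝ)) := fun f =>
    ContinuousMap.continuousMap_mem_subalgebra_closure_of_separatesPoints _
      (κ.smoothReadouts_separatesPoints hκ) f
  refine Dense.of_closure <| (dense_setOf_forall_coord_mem dense_readouts).mono fun G hG => ?_
  obtain ⟨n, g, P, hP, hGP⟩ := κ.exists_comp_aggregate_of_forall_coord_mem hG
  let readout (h : C(X, EuclideanSpace ℝ (Fin n))) : C(Y, EuclideanSpace ℝ (Fin k)) :=
    (⟨P, hP.continuous⟩ : C(_, _)).comp (κ.aggregate h)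
  have continuous_readout : Continuous readout :=
    (ContinuousMap.continuous_postcomp _).comp κ.continuous_aggregate
  obtain rfl : G = readout g := ContinuousMap.ext hGP
  refine map_mem_closure continuous_readout (hD n g) fun h hh => ?_
  exact ⟨n, h, hh, P, hP, fun _ => rfl⟩

theorem exists_lipschitz_readout_near (hκ : Function.Injective κ.measure)
    {D : ∀ n, Set C(X, EuclideanSpace ℝ (Fin n))} (hD : ∀ n, Dense (D n))
    (F : C(Y, ℝ)) {ε : ℝ} (hε : 0 < ε) :
    ∃ n, ∃ g ∈ D n, ∃ (ψ : EuclideanSpace ℝ (Fin n) → ℝ) (K : NNReal),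
      LipschitzWith K ψ ∧ ∀ y, |F y - ψ (κ.aggregate g y)| ≤ ε := by
  obtain ⟨G, ⟨n, g, hg, P, hP, hGP⟩, hFG⟩ :=
    exists_mem_forall_abs_sub_coord_le (κ.dense_setOf_comp_aggregate hκ hD 1) F hε
  obtain ⟨ψ, K, hψ, hPψ⟩ := exists_lipschitzWith_eqOn_of_contDiff (contDiff_euclidean.1 hP 0)
    (isCompact_range (κ.aggregate g).continuous)
  refine ⟨n, g, hg, ψ, K, hψ, fun y => ?_⟩
  simpa only [← hPψ (mem_range_self y), ← hGP] using hFG y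

end SubProbKernel

section WeakTopology

variable {X : Type} [TopologicalSpace X] [MeasurableSpace X]

instance : TopologicalSpace (SubProb X) := subProbWeakTop X

theorem continuous_subProb_iff {Z : Type*} [TopologicalSpace Z] {g : Z → SubProb X} :
    Continuous g ↔
      ∀ f : BoundedContinuousFunction X ℝ, Continuous fun z => ∫ x, f x ∂(g z).val :=
  continuous_iInf_rng.trans <| forall_congr' fun _ => continuous_induced_rng

theorem continuous_probM_iff {Z : Type*} [TopologicalSpace Z] {g : Z → ProbM X} :
    Continuous g ↔
      ∀ f : BoundedContinuousFunction X ℝ, Continuous fun z => ∫ x, f x ∂(g z).val :=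
  continuous_iInf_rng.trans <| forall_congr' fun _ => continuous_induced_rng

variable [CompactSpace X]

variable (X) in
/-- The tautological kernel sending a sub-probability measure to itself. -/
def subProbKernel : SubProbKernel (SubProb X) X where
  measure := Subtype.val
  measure_univ_le_one := Subtype.property
  continuous_integral f :=
    continuous_subProb_iff.1 continuous_id (BoundedContinuousFunction.mkOfCompact f)

variable (X) in
/-- The tautological kernel sending a probability measure to itself. -/
def probKernel : SubProbKernel (ProbM X) X where
  measure := Subtype.val
  measure_univ_le_one ν := ν.property.measure_univ.le
  continuous_integral f :=
    continuous_probM_iff.1 continuous_id (BoundedContinuousFunction.mkOfCompact f)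

variable [BorelSpace X]

instance [T2Space X] : CompactSpace (SubProb X) := by
  have := isCompact_iff_compactSpace.1 (isCompact_setOfPred_finiteMeasure_le_of_compactSpace X 1)
  let toSubProb (μ : {μ : FiniteMeasure X | μ.mass ≤ 1}) : SubProb X :=
    ⟨μ.1, by
      simpa only [← FiniteMeasure.ennreal_mass, ENNReal.coe_one] using ENNReal.coe_le_coe.2 μ.2⟩
  have continuous_toSubProb : Continuous toSubProb := continuous_subProb_iff.2 fun f =>
    (FiniteMeasure.continuous_integral_boundedContinuousFunction f).comp continuous_subtype_val
  have surjective_toSubProb : Function.Surjective toSubProb := fun μ =>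
    ⟨⟨⟨μ.1, ⟨μ.2.trans_lt ENNReal.one_lt_top⟩⟩, ENNReal.toNNReal_mono ENNReal.one_ne_top μ.2⟩, rfl⟩
  exact surjective_toSubProb.compactSpace continuous_toSubProb

instance [T2Space X] : CompactSpace (ProbM X) :=
  Function.surjective_id.compactSpace (X := ProbabilityMeasure X) <| continuous_probM_iff.2
    ProbabilityMeasure.continuous_integral_boundedContinuousFunction

instance [MetrizableSpace X] : MetrizableSpace (SubProb X) :=
  (subProbKernel X).metrizableSpace Subtype.val_injective

end WeakTopology

section IteratedDegreeMeasures

theorem compactSpace_and_metrizableSpace_M (t : ℕ) :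
    CompactSpace (M t) ∧ MetrizableSpace (M t) := by
  induction t with
  | zero => exact ⟨inferInstanceAs (CompactSpace Unit), inferInstanceAs (MetrizableSpace Unit)⟩
  | succ t ih =>
    obtain ⟨_, _⟩ := ih
    exact ⟨inferInstanceAs (CompactSpace (SubProb (M t))),
      inferInstanceAs (MetrizableSpace (SubProb (M t)))⟩

instance (t : ℕ) : CompactSpace (M t) := (compactSpace_and_metrizableSpace_M t).1
instance (t : ℕ) : MetrizableSpace (M t) := (compactSpace_and_metrizableSpace_M t).2

/-- The kernel `α ↦ α` along which an MPNN layer aggregates the features of depth `t`. -/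
def degreeKernel (t : ℕ) : SubProbKernel (M (t + 1)) (M t) := subProbKernel (M t)

theorem degreeKernel_measure_injective (t : ℕ) : Function.Injective (degreeKernel t).measure :=
  Subtype.val_injective

theorem continuous_projM (t : ℕ) : Continuous (projM t) := by
  induction t with
  | zero => exact continuous_const
  | succ t ih =>
    refine (continuous_subProb_iff (X := M t)).2 fun f => ?_
    have integral_projM (α : M (t + 2)) :
        ∫ x, f x ∂(toMeas α).map (projM t) = ∫ x, f (projM t x) ∂(toMeas α) :=
      integral_map ih.measurable.aemeasurable f.continuous.aestronglyMeasurable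
    exact ((degreeKernel (t + 1)).continuous_integral ⟨_, f.continuous.comp ih⟩).congr
      fun α => (integral_projM α).symm

instance : MetrizableSpace Minf := Topology.IsEmbedding.subtypeVal.metrizableSpace

instance : CompactSpace Minf := by
  have isClosed_compatible : IsClosed {α : (h : ℕ) → M h | ∀ h, projM h (α (h + 1)) = α h} := by
    simp only [ofPred_forall]
    exact isClosed_iInter fun h =>
      isClosed_eq ((continuous_projM h).comp (continuous_apply _)) (continuous_apply _)
  exact isCompact_iff_compactSpace.1 isClosed_compatible.isCompact

/-- The projection `p_{∞,t}` from the inverse limit to depth `t`. -/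
def projInf (t : ℕ) : C(Minf, M t) :=
  ⟨fun α => α.1 t, (continuous_apply t).comp continuous_subtype_val⟩

end IteratedDegreeMeasures

section Features

theorem exists_model_of_chain {t : ℕ} (c : (s : ℕ) → Σ n : ℕ, (M s → EuclideanSpace ℝ (Fin n)))
    (hc : ∀ s < t, ∃ φ : EuclideanSpace ℝ (Fin (c s).1) → EuclideanSpace ℝ (Fin (c (s + 1)).1),
      Continuous φ ∧
      (∃ K, LipschitzOnWith K φ (range fun α : M (s + 1) => ∫ β, (c s).2 β ∂(toMeas α))) ∧
      ∀ α, (c (s + 1)).2 α = φ (∫ β, (c s).2 β ∂(toMeas α))) :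
    ∃ m : MPNNModel, LipModel m t ∧ ⟨m.d t, idmFeat m t⟩ = c t := by
  have hc' (s : ℕ) :
      ∃ φ : EuclideanSpace ℝ (Fin (c s).1) → EuclideanSpace ℝ (Fin (c (s + 1)).1),
        Continuous φ ∧ (s < t →
        (∃ K, LipschitzOnWith K φ (range fun α : M (s + 1) => ∫ β, (c s).2 β ∂(toMeas α))) ∧
        ∀ α, (c (s + 1)).2 α = φ (∫ β, (c s).2 β ∂(toMeas α))) := by
    by_cases hs : s < t
    · obtain ⟨φ, hφ, hlayer⟩ := hc s hs
      exact ⟨φ, hφ, fun _ => hlayer⟩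
    · exact ⟨0, continuous_const, fun h => absurd h hs⟩
  choose φ hφ hlayer using hc'
  let m : MPNNModel := ⟨fun s => (c s).1, (c 0).2 (), φ, hφ⟩
  have idmFeat_eq (s : ℕ) (hs : s ≤ t) : idmFeat m s = (c s).2 := by
    induction s with
    | zero => rfl
    | succ s ih =>
      funext α
      rw [(hlayer s hs).2 α, ← ih (by lia)]
      rfl
  refine ⟨m, fun s hs => ?_, by rw [idmFeat_eq t le_rfl]⟩
  obtain ⟨K, hK⟩ := (hlayer s hs).1
  refine ⟨K, hK.mono ?_⟩
  rintro _ ⟨α, rfl⟩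
  exact ⟨α, by rw [idmFeat_eq s hs.le]⟩

/-- `g` is the depth-`t` feature map of a `t`-layer MPNN model. The equation lives in a sigma type
because the dimension `m.d t` of the model need not be definitionally `n`. -/
def IsMPNNFeature {t n : ℕ} (g : M t → EuclideanSpace ℝ (Fin n)) : Prop :=
  ∃ m : MPNNModel, LipModel m t ∧
    (⟨m.d t, idmFeat m t⟩ : Σ n : ℕ, (M t → EuclideanSpace ℝ (Fin n))) = ⟨n, g⟩

theorem isMPNNFeature_zero {n : ℕ} (g : M 0 → EuclideanSpace ℝ (Fin n)) : IsMPNNFeature g :=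
  ⟨⟨fun _ => n, g (), fun _ => id, fun _ => continuous_id⟩, fun _ hs => absurd hs (by lia), rfl⟩

namespace IsMPNNFeature

variable {t n : ℕ} {g : M t → EuclideanSpace ℝ (Fin n)}

theorem layer (hg : IsMPNNFeature g) {k : ℕ}
    {φ : EuclideanSpace ℝ (Fin n) → EuclideanSpace ℝ (Fin k)} (hφ : Continuous φ) {K : NNReal}
    (hK : LipschitzOnWith K φ (range fun α : M (t + 1) => ∫ β, g β ∂(toMeas α))) :
    IsMPNNFeature fun α : M (t + 1) => φ (∫ β, g β ∂(toMeas α)) := by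
  obtain ⟨m, hm, hmg⟩ := hg
  let new : Σ n : ℕ, (M (t + 1) → EuclideanSpace ℝ (Fin n)) :=
    ⟨k, fun α => φ (∫ β, g β ∂(toMeas α))⟩
  let c : (s : ℕ) → Σ n : ℕ, (M s → EuclideanSpace ℝ (Fin n)) :=
    Function.update (fun s => ⟨m.d s, idmFeat m s⟩) (t + 1) new
  have c_of_le (s : ℕ) (hs : s ≤ t) : c s = ⟨m.d s, idmFeat m s⟩ :=
    Function.update_of_ne (by lia) ..
  have c_top : c (t + 1) = new := Function.update_self ..
  rw [IsMPNNFeature, ← show c (t + 1) = ⟨k, _⟩ from c_top]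
  refine exists_model_of_chain c fun s hs => ?_
  rcases Nat.lt_succ_iff_lt_or_eq.1 hs with hs | rfl
  · obtain ⟨K, hK⟩ := hm s hs
    rw [c_of_le s hs.le, c_of_le (s + 1) hs]
    refine ⟨m.φ s, m.cont s, ⟨K, hK.mono ?_⟩, fun _ => rfl⟩
    rintro _ ⟨α, rfl⟩
    exact ⟨α, rfl⟩
  · rw [c_of_le s le_rfl, hmg, c_top]
    exact ⟨φ, hφ, ⟨K, hK⟩, fun _ => rfl⟩

theorem coord_mem_NSet {g : M t → EuclideanSpace ℝ (Fin 1)} (hg : IsMPNNFeature g) :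
    (fun α => g α 0) ∈ NSet t := by
  have sum_coord_mem {n : ℕ} {g : M t → EuclideanSpace ℝ (Fin n)} (hg : IsMPNNFeature g)
      (hn : n = 1) : (fun α => ∑ i, g α i) ∈ NSet t := by
    obtain ⟨m, hm, ⟨⟩⟩ := hg
    exact ⟨m, hm, hn, rfl⟩
  simpa using sum_coord_mem hg rfl

theorem coord_comp_projInf_mem_NSetInf {g : M t → EuclideanSpace ℝ (Fin 1)}
    (hg : IsMPNNFeature g) : (fun α => g (projInf t α) 0) ∈ NSetInf := by
  obtain ⟨m, hm, hd, hgm⟩ := hg.coord_mem_NSet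
  exact ⟨t, m, hm, hd, funext fun α => congrFun hgm (projInf t α)⟩

theorem readout_mem_NNSet (hg : IsMPNNFeature g) {ψ : EuclideanSpace ℝ (Fin n) → ℝ} {K : NNReal}
    (hψ : LipschitzWith K ψ) : (fun ν : ProbM (M t) => ψ (∫ β, g β ∂ν.1)) ∈ NNSet t := by
  obtain ⟨m, hm, ⟨⟩⟩ := hg
  exact ⟨m, ψ, K, hm, hψ, rfl⟩

theorem readout_comp_projInf_mem_NNSetInf (hg : IsMPNNFeature g) (hgc : Continuous g)
    {ψ : EuclideanSpace ℝ (Fin n) → ℝ} {K : NNReal} (hψ : LipschitzWith K ψ) :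
    (fun ν : ProbM Minf => ψ (∫ α, g (projInf t α) ∂ν.1)) ∈ NNSetInf := by
  obtain ⟨m, hm, ⟨⟩⟩ := hg
  refine ⟨t, m, ψ, K, hm, hψ, funext fun ν => congrArg ψ ?_⟩
  exact (integral_map (projInf t).continuous.measurable.aemeasurable
    hgc.aestronglyMeasurable).symm

end IsMPNNFeature

end Features

section Density

theorem dense_isMPNNFeature (t k : ℕ) :
    Dense {g : C(M t, EuclideanSpace ℝ (Fin k)) | IsMPNNFeature g} := by
  induction t generalizing k with
  | zero => exact dense_univ.mono fun g _ => isMPNNFeature_zero g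
  | succ t ih =>
    refine ((degreeKernel t).dense_setOf_comp_aggregate (degreeKernel_measure_injective t)
      ih k).mono ?_
    rintro G ⟨n, g, hg, P, hP, hGP⟩
    obtain ⟨K, hK⟩ := hP.locallyLipschitz.locallyLipschitzOn.exists_lipschitzOnWith_of_compact
      (isCompact_range ((degreeKernel t).aggregate g).continuous)
    rw [mem_ofPred_eq, funext hGP]
    exact hg.layer hP.continuous hK

/-- The algebra of functions on the inverse limit that factor through some `M t`. -/
def cylinderFunctions : Subalgebra ℝ C(Minf, ℝ) :=
  ⨆ t, (ContinuousMap.compRightAlgHom ℝ ℝ (projInf t)).range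

theorem monotone_range_compRightAlgHom_projInf :
    Monotone fun t => (ContinuousMap.compRightAlgHom ℝ ℝ (projInf t)).range := by
  refine monotone_nat_of_le_succ fun t => ?_
  rintro _ ⟨G, rfl⟩
  exact ⟨G.comp ⟨projM t, continuous_projM t⟩, ContinuousMap.ext fun α => congrArg G (α.2 t)⟩

theorem cylinderFunctions_separatesPoints : cylinderFunctions.SeparatesPoints := by
  intro α β hαβ
  obtain ⟨t, ht⟩ : ∃ t, projInf t α ≠ projInf t β := by
    by_contra! hagree
    exact hαβ (Subtype.ext (funext hagree))
  let _ : MetricSpace (M t) := metrizableSpaceMetric (M t)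
  let G : C(M t, ℝ) := ⟨fun γ => dist γ (projInf t β), by fun_prop⟩
  refine ⟨_, ⟨G.comp (projInf t), ?_, rfl⟩, ?_⟩
  · exact le_iSup (fun t => (ContinuousMap.compRightAlgHom ℝ ℝ (projInf t)).range) t ⟨G, rfl⟩
  · simpa [G] using ht

theorem exists_eq_comp_projInf_of_forall_coord_mem {k : ℕ}
    {G : C(Minf, EuclideanSpace ℝ (Fin k))}
    (hG : ∀ i, ∃ f ∈ cylinderFunctions, ∀ α, G α i = f α) :
    ∃ (t : ℕ) (H : C(M t, EuclideanSpace ℝ (Fin k))), G = H.comp (projInf t) := by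
  choose f hf hGf using hG
  have exists_depth (i : Fin k) :
      ∃ t, f i ∈ (ContinuousMap.compRightAlgHom ℝ ℝ (projInf t)).range := by
    have hfi := hf i
    rwa [cylinderFunctions, ← SetLike.mem_coe, Subalgebra.coe_iSup_of_directed
      monotone_range_compRightAlgHom_projInf.directed_le, mem_iUnion] at hfi
  choose depth hdepth using exists_depth
  let t := Finset.univ.sup depth
  choose H hH using fun i =>
    monotone_range_compRightAlgHom_projInf (Finset.le_sup (Finset.mem_univ i) : _ ≤ t) (hdepth i)
  refine ⟨t, ⟨fun γ => WithLp.toLp 2 fun i => H i γ, by fun_prop⟩, ?_⟩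
  ext α i
  rw [hGf, ← hH]
  rfl

theorem dense_isMPNNFeature_comp_projInf (k : ℕ) :
    Dense {G : C(Minf, EuclideanSpace ℝ (Fin k)) |
      ∃ (t : ℕ) (g : C(M t, EuclideanSpace ℝ (Fin k))),
        IsMPNNFeature g ∧ G = g.comp (projInf t)} := by
  have dense_cylinder : Dense (cylinderFunctions : Set C(Minf, ℝ)) := fun f =>
    ContinuousMap.continuousMap_mem_subalgebra_closure_of_separatesPoints _
      cylinderFunctions_separatesPoints f
  refine Dense.of_closure <| (dense_setOf_forall_coord_mem dense_cylinder).mono fun G hG => ?_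
  obtain ⟨t, H, rfl⟩ := exists_eq_comp_projInf_of_forall_coord_mem hG
  let pullback (g : C(M t, EuclideanSpace ℝ (Fin k))) := g.comp (projInf t)
  have continuous_pullback : Continuous pullback := ContinuousMap.continuous_precomp _
  exact map_mem_closure (f := pullback) continuous_pullback (dense_isMPNNFeature t k H)
    fun g hg => ⟨t, g, hg, rfl⟩

end Density

/-- Universal approximation: for every `0 ≤ L ≤ ∞`, the MPNN feature functions
`N_L^1` are dense in `C(M L, ℝ)` w.r.t. the supremum norm, and the graph-level MPNN
functions `NN_L^1` are dense in `C(P(M L), ℝ)`. -/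
theorem mpnn_universal_approximation :
    (∀ L : ℕ,
      (∀ F : M L → ℝ, Continuous F → ∀ ε : ℝ, 0 < ε →
        ∃ f ∈ NSet L, ∀ α, |F α - f α| ≤ ε) ∧
      (∀ F : ProbM (M L) → ℝ, Continuous F → ∀ ε : ℝ, 0 < ε →
        ∃ f ∈ NNSet L, ∀ ν, |F ν - f ν| ≤ ε)) ∧
    ((∀ F : Minf → ℝ, Continuous F → ∀ ε : ℝ, 0 < ε →
        ∃ f ∈ NSetInf, ∀ α, |F α - f α| ≤ ε) ∧
      (∀ F : ProbM Minf → ℝ, Continuous F → ∀ ε : ℝ, 0 < ε →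
        ∃ f ∈ NNSetInf, ∀ ν, |F ν - f ν| ≤ ε)) := by
  refine ⟨fun L => ⟨fun F hF ε hε => ?_, fun F hF ε hε => ?_⟩,
    fun F hF ε hε => ?_, fun F hF ε hε => ?_⟩
  · obtain ⟨g, hg, hFg⟩ :=
      exists_mem_forall_abs_sub_coord_le (dense_isMPNNFeature L 1) ⟨F, hF⟩ hε
    exact ⟨_, hg.coord_mem_NSet, hFg⟩
  · obtain ⟨n, g, hg, ψ, K, hψ, hFψ⟩ := (probKernel (M L)).exists_lipschitz_readout_near
      Subtype.val_injective (dense_isMPNNFeature L) ⟨F, hF⟩ hε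
    exact ⟨_, hg.readout_mem_NNSet hψ, hFψ⟩
  · obtain ⟨_, ⟨t, g, hg, rfl⟩, hFg⟩ :=
      exists_mem_forall_abs_sub_coord_le (dense_isMPNNFeature_comp_projInf 1) ⟨F, hF⟩ hε
    exact ⟨_, hg.coord_comp_projInf_mem_NSetInf, hFg⟩
  · obtain ⟨n, _, ⟨t, g, hg, rfl⟩, ψ, K, hψ, hFψ⟩ :=
      (probKernel Minf).exists_lipschitz_readout_near Subtype.val_injective
        dense_isMPNNFeature_comp_projInf ⟨F, hF⟩ hε
    exact ⟨_, hg.readout_comp_projInf_mem_NNSetInf g.continuous hψ, hFψ⟩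

end
end

section
/- Fix n > 0. For every ε > 0 there exist L ∈ ℕ, C > 0, and δ > 0 such that for all graphons U and W: if ‖h_U − h_W‖₂ ≤ δ for every L'-layer MPNN model φ and every Lipschitz ψ : ℝ^{d_{L'}} → ℝⁿ with L' ≤ L and C_{(φ,ψ)} ≤ C, then δ_P(U,W) ≤ ε. -/
open MeasureTheory Set

noncomputable section

/-- The open `ε`-thickening `A^ε` of a set w.r.t. a distance function. -/
def thicken {X : Type _} (d : X → X → ℝ) (ε : ℝ) (A : Set X) : Set X :=
  {y | ∃ x ∈ A, d x y < ε}

/-- The Prokhorov distance of two measures w.r.t. a distance function `d`. -/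
def prokhorovDist {X : Type _} [MeasurableSpace X] (d : X → X → ℝ)
    (μ ν : Measure X) : ℝ :=
  sInf {ε : ℝ | 0 < ε ∧ ∀ A : Set X, MeasurableSet A →
    μ A ≤ ν (thicken d ε A) + ENNReal.ofReal ε ∧
    ν A ≤ μ (thicken d ε A) + ENNReal.ofReal ε}

/-- The iterated Prokhorov metrics `P^h` on the spaces `M h`. -/
def Pdist : (h : ℕ) → M h → M h → ℝ
  | 0, _, _ => 0
  | (h+1), α, β => prokhorovDist (Pdist h) (toMeas α) (toMeas β)

/-- A graphon: a symmetric measurable kernel `[0,1]² → [0,1]` (here defined on all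
of `ℝ²`, with `[0,1]` carrying the Lebesgue measure). -/
structure Graphon where
  W : ℝ → ℝ → ℝ
  symm : ∀ x y, W x y = W y x
  mem : ∀ x y, W x y ∈ Set.Icc (0:ℝ) 1
  meas : Measurable (Function.uncurry W)

/-- MPNN point features on a graphon kernel. -/
def graphonFeat (m : MPNNModel) (W : ℝ → ℝ → ℝ) :
    (t : ℕ) → ℝ → EuclideanSpace ℝ (Fin (m.d t))
  | 0, _ => m.φ₀
  | (t+1), x => m.φ t (∫ y in Set.Icc (0:ℝ) 1, W x y • graphonFeat m W t y)

/-- The graphon 1-WL maps `i_{W,h} : [0,1] → M h`: `i_{W,h+1}(x)` is the pushforward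
along `i_{W,h}` of the measure on `[0,1]` with density `W(x,·)`. -/
def wlMap (W : Graphon) : (h : ℕ) → ℝ → M h
  | 0, _ => ()
  | (h+1), x => ofSub ⟨Measure.map (wlMap W h)
      ((volume.restrict (Set.Icc (0:ℝ) 1)).withDensity fun y =>
        ENNReal.ofReal (W.W x y)), by
      by_cases hf : AEMeasurable (wlMap W h)
          ((volume.restrict (Set.Icc (0:ℝ) 1)).withDensity fun y =>
            ENNReal.ofReal (W.W x y))
      · rw [Measure.map_apply_of_aemeasurable hf MeasurableSet.univ, Set.preimage_univ,
          withDensity_apply _ MeasurableSet.univ, Measure.restrict_univ]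
        calc ∫⁻ y, ENNReal.ofReal (W.W x y) ∂(volume.restrict (Set.Icc (0:ℝ) 1))
            ≤ ∫⁻ _, 1 ∂(volume.restrict (Set.Icc (0:ℝ) 1)) :=
              lintegral_mono fun y => ENNReal.ofReal_le_one.mpr (W.mem x y).2
          _ ≤ 1 := by simp [Real.volume_Icc]
      · rw [Measure.map_of_not_aemeasurable hf]
        simp⟩


/-- `d_P(α,β) = sup_h (1/h) · P^h(α_h, β_h)` on the inverse limit. -/
def dPinf (α β : Minf) : ℝ := ⨆ h : ℕ, ((h : ℝ))⁻¹ * Pdist h (α.1 h) (β.1 h)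

/-- The all-zero iterated degree measures. -/
def zeroM : (h : ℕ) → M h
  | 0 => ()
  | (_+1) => ofSub ⟨0, by simp⟩

/-- The consistent sequence of all-zero iterated degree measures. -/
def zeroSeq : Minf :=
  ⟨fun h => zeroM h, by
    intro h
    cases h with
    | zero => rfl
    | succ h => exact Subtype.ext (Measure.map_zero _)⟩

open Classical in
/-- The graphon 1-WL map `i_W : [0,1] → M` into the inverse limit. -/
def iWinf (W : Graphon) (x : ℝ) : Minf :=
  if h : ∀ h', projM h' (wlMap W (h'+1) x) = wlMap W h' x then
    ⟨fun h' => wlMap W h' x, h⟩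
  else zeroSeq

/-- The distribution of iterated degree measures `ν_W ∈ P(M)` of a graphon. -/
def nuW (W : Graphon) : Measure Minf :=
  Measure.map (iWinf W) (volume.restrict (Set.Icc (0:ℝ) 1))

/-- The Prokhorov distance of two graphons: `δ_P(U,W) = δP^∞(ν_U, ν_W)`. -/
def deltaP (U W : Graphon) : ℝ := prokhorovDist dPinf (nuW U) (nuW W)

/-- The set `{∫ h^{(L)}_β dν : ν ∈ P(M L)}` of attainable aggregated inputs of the
readout function. -/
def probAgg (m : MPNNModel) (L : ℕ) : Set (EuclideanSpace ℝ (Fin (m.d L))) :=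
  {z | ∃ ν : ProbM (M L), z = ∫ β, idmFeat m L β ∂ν.1}

/-- The Lipschitz constant of `f` on the set `s`. -/
def lipConstOn {E F : Type _} [PseudoMetricSpace E] [PseudoMetricSpace F]
    (f : E → F) (s : Set E) : ℝ :=
  sInf {K : ℝ | 0 ≤ K ∧ ∀ x ∈ s, ∀ y ∈ s, dist (f x) (f y) ≤ K * dist x y}

/-- `‖h^{(t)}‖_∞`, the supremum of the norms of the `t`-th layer MPNN features. -/
def supNorm (m : MPNNModel) (t : ℕ) : ℝ := ⨆ α : M t, ‖idmFeat m t α‖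

/-- The Lipschitz constant `C_φ` of an MPNN model:
`C_{φ₀} = 0`, `C_{φ_{t+1}} = ‖φ_t‖_L · (‖h^{(t)}‖_∞ + C_{φ_t})`. -/
def Cphi (m : MPNNModel) : ℕ → ℝ
  | 0 => 0
  | (t+1) => lipConstOn (m.φ t) (aggSet m t) * (supNorm m t + Cphi m t)

/-- The Lipschitz constant `C_{(φ,ψ)} = ‖ψ‖_L · (‖h^{(L)}‖_∞ + C_φ)`. -/
def Cpair (m : MPNNModel) (L : ℕ) {dout : ℕ}
    (ψ : EuclideanSpace ℝ (Fin (m.d L)) → EuclideanSpace ℝ (Fin dout)) : ℝ :=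
  lipConstOn ψ (probAgg m L) * (supNorm m L + Cphi m L)

/-!
Fix `L > 1/ε`. Then `d_P(α, β) < ε` as soon as `P^L(α_L, β_L) < ε`, because `P^h` grows with `h`
and is at most one. Choose a single MPNN model each of whose layers is a Lipschitz partition of
unity of the unit ball of the previous feature space into parts of small diameter. By induction on
the layer, two iterated degree measures whose features share a positive coordinate are
`P^t`-close: their aggregated features are close, and if the coordinates of `f` form a partition
of unity into parts of diameter less than `r`, then summing the parts that meet `A` gives a
function between the indicators of `A` and `A^r`, so closeness of the integrals of `f` bounds the
Prokhorov distance by `r`. The same criterion, applied to the `L`-th features and `ν_U`, `ν_W`,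
reduces the theorem to comparing finitely many averaged coordinates, each of which is read out by
a 1-Lipschitz map.
-/

section WeakTopology

open scoped BoundedContinuousFunction

local instance (X : Type) [MeasurableSpace X] [TopologicalSpace X] :
    TopologicalSpace (SubProb X) :=
  subProbWeakTop X

lemma integrable_of_continuous_of_compactSpace {X E : Type*} [TopologicalSpace X] [CompactSpace X]
    [MeasurableSpace X] [OpensMeasurableSpace X] [NormedAddCommGroup E]
    (μ : Measure X) [IsFiniteMeasure μ] {f : X → E} (hf : Continuous f) : Integrable f μ :=
  hf.integrable_of_hasCompactSupport (.of_compactSpace f)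

lemma continuous_integral_continuousMap {X : Type*} [TopologicalSpace X] [CompactSpace X]
    [MeasurableSpace X] [OpensMeasurableSpace X] (μ : Measure X) [IsFiniteMeasure μ] :
    Continuous fun f : C(X, ℝ) => ∫ x, f x ∂μ := by
  have integrable (f : C(X, ℝ)) : Integrable f μ :=
    integrable_of_continuous_of_compactSpace μ f.continuous
  refine (LipschitzWith.of_dist_le_mul (K := (μ.real univ).toNNReal) fun f g => ?_).continuous
  rw [dist_eq_norm, ← integral_sub (integrable f) (integrable g), mul_comm,
    Real.coe_toNNReal _ measureReal_nonneg]
  exact norm_integral_le_of_norm_le_const (.of_forall fun x => by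
    rw [← dist_eq_norm]; exact ContinuousMap.dist_apply_le_dist x)

namespace SubProb

variable {X : Type} [MeasurableSpace X]

instance isFiniteMeasure (μ : SubProb X) : IsFiniteMeasure μ.1 :=
  ⟨μ.2.trans_lt ENNReal.one_lt_top⟩

/-- A subprobability measure as a finite measure; this transports Mathlib's compactness theorem for
the weak topology to `SubProb X`. -/
def toFiniteMeasure (μ : SubProb X) : FiniteMeasure X := ⟨μ.1, inferInstance⟩

lemma range_toFiniteMeasure :
    range (toFiniteMeasure (X := X)) = {μ : FiniteMeasure X | μ.mass ≤ 1} := by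
  ext μ
  have mass_le_one_iff : μ.mass ≤ 1 ↔ (μ : Measure X) univ ≤ 1 := by
    rw [← FiniteMeasure.ennreal_mass, ENNReal.coe_le_one_iff]
  constructor
  · rintro ⟨α, rfl⟩
    exact mass_le_one_iff.2 α.2
  · exact fun hμ => ⟨⟨μ, mass_le_one_iff.1 hμ⟩, rfl⟩

variable [TopologicalSpace X]

lemma continuous_integral (f : X →ᵇ ℝ) : Continuous fun μ : SubProb X => ∫ x, f x ∂μ.1 :=
  continuous_iInf_dom (i := f) continuous_induced_dom

lemma isInducing_toFiniteMeasure [OpensMeasurableSpace X] :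
    Topology.IsInducing (toFiniteMeasure (X := X)) := by
  refine ⟨le_antisymm ?_ (le_iInf fun f => ?_)⟩
  · rw [← continuous_iff_le_induced, continuous_iff_continuousAt]
    exact fun μ => FiniteMeasure.tendsto_iff_forall_integral_tendsto.2 fun f =>
      (continuous_integral f).tendsto μ
  · exact (induced_mono <| continuous_iff_le_induced.1 <|
      FiniteMeasure.continuous_integral_boundedContinuousFunction f).trans induced_compose.le

variable [BorelSpace X] [CompactSpace X] [T2Space X]

instance compactSpace : CompactSpace (SubProb X) := by
  rw [← isCompact_univ_iff, isInducing_toFiniteMeasure.isCompact_iff, image_univ,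
    range_toFiniteMeasure]
  exact isCompact_setOfPred_finiteMeasure_le_of_compactSpace X 1

variable [SecondCountableTopology X]

/-- The integrals of a subprobability measure against a fixed dense sequence of continuous
functions: countably many coordinates that determine the measure. -/
def denseIntegrals (μ : SubProb X) (n : ℕ) : ℝ :=
  ∫ x, TopologicalSpace.denseSeq C(X, ℝ) n x ∂μ.1

lemma denseIntegrals_injective : Function.Injective (denseIntegrals (X := X)) := by
  intro μ ν h
  have integral_eq : (fun f : C(X, ℝ) => ∫ x, f x ∂μ.1) = fun f => ∫ x, f x ∂ν.1 :=
    (TopologicalSpace.denseRange_denseSeq C(X, ℝ)).equalizer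
      (continuous_integral_continuousMap μ.1) (continuous_integral_continuousMap ν.1) h
  exact Subtype.ext <| ext_of_forall_integral_eq_of_IsFiniteMeasure fun f =>
    congrFun integral_eq f.toContinuousMap

lemma isClosedEmbedding_denseIntegrals :
    Topology.IsClosedEmbedding (denseIntegrals (X := X)) :=
  (continuous_pi fun _ => continuous_integral (.mkOfCompact _)).isClosedEmbedding
    denseIntegrals_injective

end SubProb

lemma M_compactSpace_t2Space_secondCountableTopology :
    ∀ h, CompactSpace (M h) ∧ T2Space (M h) ∧ SecondCountableTopology (M h)
  | 0 => by
    change CompactSpace Unit ∧ T2Space Unit ∧ SecondCountableTopology Unit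
    exact ⟨inferInstance, inferInstance, inferInstance⟩
  | h + 1 => by
    obtain ⟨_, _, _⟩ := M_compactSpace_t2Space_secondCountableTopology h
    have embedding := (SubProb.isClosedEmbedding_denseIntegrals (X := M h)).isEmbedding
    exact ⟨SubProb.compactSpace (X := M h), embedding.t2Space, embedding.secondCountableTopology⟩

instance (h : ℕ) : CompactSpace (M h) := (M_compactSpace_t2Space_secondCountableTopology h).1
instance (h : ℕ) : T2Space (M h) := (M_compactSpace_t2Space_secondCountableTopology h).2.1
instance (h : ℕ) : SecondCountableTopology (M h) :=
  (M_compactSpace_t2Space_secondCountableTopology h).2.2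

instance {h : ℕ} (α : M (h + 1)) : IsFiniteMeasure (toMeas α) :=
  SubProb.isFiniteMeasure (toSub α)

lemma toMeas_univ_le_one {h : ℕ} (α : M (h + 1)) : toMeas α univ ≤ 1 := (toSub α).2

lemma isClosedEmbedding_denseIntegrals_toSub (h : ℕ) :
    Topology.IsClosedEmbedding fun α : M (h + 1) => (toSub α).denseIntegrals :=
  SubProb.isClosedEmbedding_denseIntegrals (X := M h)

lemma continuous_integral_toMeas {h : ℕ} {f : M h → ℝ} (hf : Continuous f) :
    Continuous fun α : M (h + 1) => ∫ β, f β ∂(toMeas α) :=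
  SubProb.continuous_integral (.mkOfCompact ⟨f, hf⟩)

lemma continuous_of_continuous_integral {Y : Type*} [TopologicalSpace Y] {h : ℕ}
    {g : Y → M (h + 1)}
    (hg : ∀ f : C(M h, ℝ), Continuous fun y => ∫ β, f β ∂(toMeas (g y))) : Continuous g :=
  (isClosedEmbedding_denseIntegrals_toSub h).isInducing.continuous_iff.2 <|
    continuous_pi fun _ => hg _

lemma measurable_of_measurable_integral {Y : Type*} [MeasurableSpace Y] {h : ℕ}
    {g : Y → M (h + 1)}
    (hg : ∀ f : C(M h, ℝ), Measurable fun y => ∫ β, f β ∂(toMeas (g y))) : Measurable g :=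
  (isClosedEmbedding_denseIntegrals_toSub h).measurableEmbedding.measurable_comp_iff.1 <|
    measurable_pi_lambda _ fun _ => hg _

end WeakTopology

lemma continuous_projM_s17 : ∀ h, Continuous (projM h)
  | 0 => continuous_const (y := (() : M 0))
  | h + 1 => by
    have ih := continuous_projM_s17 h
    refine continuous_of_continuous_integral fun f => ?_
    have integral_projM (α : M (h + 2)) :
        ∫ β, f β ∂(toMeas (projM (h + 1) α)) = ∫ β, f (projM h β) ∂(toMeas α) :=
      integral_map ih.aemeasurable f.continuous.aestronglyMeasurable
    simp only [integral_projM]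
    exact continuous_integral_toMeas (f.continuous.comp ih)

lemma isClosedEmbedding_Minf_val :
    Topology.IsClosedEmbedding (Subtype.val : Minf → (h : ℕ) → M h) := by
  refine IsClosed.isClosedEmbedding_subtypeVal (?_ : IsClosed {α : (h : ℕ) → M h | _})
  rw [ofPred_forall]
  exact isClosed_iInter fun h =>
    isClosed_eq ((continuous_projM_s17 h).comp (continuous_apply (h + 1))) (continuous_apply h)

instance inst_s17 : CompactSpace Minf := isClosedEmbedding_Minf_val.compactSpace

namespace Graphon

variable (W : Graphon)

lemma measurable_right (x : ℝ) : Measurable (W.W x) :=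
  W.meas.comp measurable_prodMk_left

lemma integral_toMeas_wlMap {E : Type*} [NormedAddCommGroup E] [NormedSpace ℝ E]
    [SecondCountableTopology E] {h : ℕ} (hW : Measurable (wlMap W h)) {f : M h → E}
    (hf : Continuous f) (x : ℝ) :
    ∫ β, f β ∂(toMeas (wlMap W (h + 1) x)) =
      ∫ y in Icc (0 : ℝ) 1, W.W x y • f (wlMap W h y) := by
  change ∫ β, f β ∂(Measure.map (wlMap W h) _) = _
  rw [integral_map hW.aemeasurable hf.aestronglyMeasurable,
    integral_withDensity_eq_integral_toReal_smul (W.measurable_right x).ennreal_ofReal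
      (.of_forall fun _ => ENNReal.ofReal_lt_top)]
  simp only [ENNReal.toReal_ofReal (W.mem _ _).1]

lemma measurable_wlMap : ∀ h, Measurable (wlMap W h)
  | 0 => measurable_const (a := (() : M 0))
  | h + 1 => by
    have ih := measurable_wlMap h
    refine measurable_of_measurable_integral fun f => ?_
    simp only [W.integral_toMeas_wlMap ih f.continuous]
    have integrand_measurable :
        Measurable (Function.uncurry fun x y => W.W x y • f (wlMap W h y)) :=
      W.meas.smul ((f.continuous.measurable.comp ih).comp measurable_snd)
    exact integrand_measurable.stronglyMeasurable.integral_prod_right.measurable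

lemma projM_wlMap : ∀ h x, projM h (wlMap W (h + 1) x) = wlMap W h x
  | 0, _ => rfl
  | h + 1, x => by
    refine Subtype.ext ?_
    change Measure.map (projM h) (Measure.map (wlMap W (h + 1)) _) = Measure.map (wlMap W h) _
    rw [Measure.map_map (continuous_projM_s17 h).measurable (W.measurable_wlMap (h + 1)),
      show projM h ∘ wlMap W (h + 1) = wlMap W h from funext (projM_wlMap h)]

lemma iWinf_val (x : ℝ) (h : ℕ) : (iWinf W x).1 h = wlMap W h x := by
  rw [iWinf, dif_pos fun h' => W.projM_wlMap h' x]

lemma measurable_iWinf : Measurable (iWinf W) := by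
  refine isClosedEmbedding_Minf_val.measurableEmbedding.measurable_comp_iff.1 <|
    measurable_pi_iff.2 fun h => ?_
  simp only [Function.comp_apply, W.iWinf_val]
  exact W.measurable_wlMap h

instance : IsFiniteMeasure (nuW W) :=
  inferInstanceAs (IsFiniteMeasure (Measure.map _ _))

lemma integral_nuW {E : Type*} [NormedAddCommGroup E] [NormedSpace ℝ E]
    [SecondCountableTopology E] {t : ℕ} {f : M t → E} (hf : Continuous f) :
    ∫ α, f (α.1 t) ∂(nuW W) = ∫ x in Icc (0 : ℝ) 1, f (wlMap W t x) := by
  have continuous_feature : Continuous fun α : Minf => f (α.1 t) :=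
    hf.comp ((continuous_apply t).comp continuous_subtype_val)
  rw [nuW, integral_map W.measurable_iWinf.aemeasurable continuous_feature.aestronglyMeasurable]
  simp only [W.iWinf_val]

end Graphon

section Prokhorov

variable {X Y : Type*} [MeasurableSpace X] [MeasurableSpace Y]

/-- The admissible radii in the definition of the Prokhorov distance: `prokhorovDist d μ ν` is by
definition the infimum of `prokhorovRadii d μ ν`. -/
def prokhorovRadii (d : X → X → ℝ) (μ ν : Measure X) : Set ℝ :=
  {ε | 0 < ε ∧ ∀ A, MeasurableSet A →
    μ A ≤ ν (thicken d ε A) + ENNReal.ofReal ε ∧ ν A ≤ μ (thicken d ε A) + ENNReal.ofReal ε}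

variable {d : X → X → ℝ} {μ ν : Measure X} {ε : ℝ}

lemma bddBelow_prokhorovRadii : BddBelow (prokhorovRadii d μ ν) := ⟨0, fun _ hε => hε.1.le⟩

lemma prokhorovDist_nonneg : 0 ≤ prokhorovDist d μ ν := Real.sInf_nonneg fun _ hε => hε.1.le

lemma prokhorovDist_le_of_mem (hε : ε ∈ prokhorovRadii d μ ν) : prokhorovDist d μ ν ≤ ε :=
  csInf_le bddBelow_prokhorovRadii hε

lemma mem_prokhorovRadii_of_measure_univ_le (hε : 0 < ε) (hμ : μ univ ≤ ENNReal.ofReal ε)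
    (hν : ν univ ≤ ENNReal.ofReal ε) : ε ∈ prokhorovRadii d μ ν :=
  ⟨hε, fun A _ => ⟨(measure_mono (subset_univ A)).trans (hμ.trans le_add_self),
    (measure_mono (subset_univ A)).trans (hν.trans le_add_self)⟩⟩

lemma prokhorovRadii_nonempty [IsFiniteMeasure μ] [IsFiniteMeasure ν] :
    (prokhorovRadii d μ ν).Nonempty := by
  refine ⟨(μ univ + ν univ).toReal + 1, mem_prokhorovRadii_of_measure_univ_le (by positivity) ?_ ?_⟩
  all_goals
    refine ENNReal.le_ofReal_iff_toReal_le (measure_ne_top _ _) (by positivity) |>.2 ?_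
    rw [ENNReal.toReal_add (measure_ne_top _ _) (measure_ne_top _ _)]
    linarith [ENNReal.toReal_nonneg (a := μ univ), ENNReal.toReal_nonneg (a := ν univ)]

lemma map_le_map_thicken_add {d' : Y → Y → ℝ} {f : X → Y} (hf : Measurable f)
    (hd : ∀ x y, d' (f x) (f y) ≤ d x y) {A : Set Y} (hA : MeasurableSet A) {c : ENNReal}
    (h : μ (f ⁻¹' A) ≤ ν (thicken d ε (f ⁻¹' A)) + c) :
    μ.map f A ≤ ν.map f (thicken d' ε A) + c := by
  have thicken_preimage_subset : thicken d ε (f ⁻¹' A) ⊆ f ⁻¹' thicken d' ε A :=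
    fun y ⟨x, hx, hxy⟩ => ⟨f x, hx, (hd x y).trans_lt hxy⟩
  rw [Measure.map_apply hf hA]
  refine h.trans (add_le_add_left ?_ c)
  exact (measure_mono thicken_preimage_subset).trans (Measure.le_map_apply hf.aemeasurable _)

lemma prokhorovDist_map_le [IsFiniteMeasure μ] [IsFiniteMeasure ν] {d' : Y → Y → ℝ} {f : X → Y}
    (hf : Measurable f) (hd : ∀ x y, d' (f x) (f y) ≤ d x y) :
    prokhorovDist d' (μ.map f) (ν.map f) ≤ prokhorovDist d μ ν :=
  csInf_le_csInf bddBelow_prokhorovRadii prokhorovRadii_nonempty fun _ ⟨hε, h⟩ =>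
    ⟨hε, fun _ hA => ⟨map_le_map_thicken_add hf hd hA (h _ (hf hA)).1,
      map_le_map_thicken_add hf hd hA (h _ (hf hA)).2⟩⟩

variable {ι : Type*} [Fintype ι] {f : X → ι → ℝ}

lemma measure_le_measure_thicken_add_of_partition (hf : ∀ x, f x ∈ stdSimplex ℝ ι)
    (hfμ : ∀ i, Integrable (f · i) μ) (hfν : ∀ i, Integrable (f · i) ν)
    (hd : ∀ x y i, 0 < f x i → 0 < f y i → d x y < ε)
    (hfε : ∑ i, |∫ x, f x i ∂μ - ∫ x, f x i ∂ν| ≤ ε) (A : Set X) :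
    μ A ≤ ν (thicken d ε A) + ENNReal.ofReal ε := by
  classical
  let S : Finset ι := {i | ∃ x ∈ A, 0 < f x i}
  let F (x : X) : ℝ := ∑ i ∈ S, f x i
  have F_nonneg (x : X) : 0 ≤ F x := Finset.sum_nonneg fun i _ => (hf x).1 i
  have F_le_one (x : X) : F x ≤ 1 :=
    (Finset.sum_le_univ_sum_of_nonneg (hf x).1).trans (hf x).2.le
  have one_le_F : ∀ x ∈ A, 1 ≤ F x := fun x hx => by
    refine (hf x).2.ge.trans (Finset.sum_subset (Finset.subset_univ S) fun i _ hi => ?_).ge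
    by_contra hne
    exact hi (by simpa [S] using ⟨x, hx, ((hf x).1 i).lt_of_ne' hne⟩)
  have F_nonpos : ∀ x ∈ (thicken d ε A)ᶜ, F x ≤ 0 := fun y hy =>
    Finset.sum_nonpos fun i hi => by
      obtain ⟨x, hx, hxi⟩ : ∃ x ∈ A, 0 < f x i := by simpa [S] using hi
      by_contra! hyi
      exact hy ⟨x, hx, hd x y i hxi hyi⟩
  have integral_F_le : ∫ x, F x ∂μ ≤ ∫ x, F x ∂ν + ε := by
    rw [integral_finsetSum _ fun i _ => hfμ i, integral_finsetSum _ fun i _ => hfν i,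
      ← sub_le_iff_le_add', ← Finset.sum_sub_distrib]
    exact (Finset.sum_le_sum fun i _ => le_abs_self _).trans <|
      (Finset.sum_le_univ_sum_of_nonneg fun i => abs_nonneg _).trans hfε
  calc μ A ≤ ENNReal.ofReal (∫ x, F x ∂μ) :=
        (integrable_finsetSum _ fun i _ => hfμ i).measure_le_integral (.of_forall F_nonneg)
          one_le_F
    _ ≤ ENNReal.ofReal (∫ x, F x ∂ν + ε) := ENNReal.ofReal_le_ofReal integral_F_le
    _ ≤ ENNReal.ofReal (∫ x, F x ∂ν) + ENNReal.ofReal ε := ENNReal.ofReal_add_le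
    _ ≤ ν (thicken d ε A) + ENNReal.ofReal ε :=
        add_le_add_left (integral_le_measure (fun x _ => F_le_one x) F_nonpos) _

lemma prokhorovDist_le_of_partition (hε : 0 < ε) (hf : ∀ x, f x ∈ stdSimplex ℝ ι)
    (hfμ : ∀ i, Integrable (f · i) μ) (hfν : ∀ i, Integrable (f · i) ν)
    (hd : ∀ x y i, 0 < f x i → 0 < f y i → d x y < ε)
    (hfε : ∑ i, |∫ x, f x i ∂μ - ∫ x, f x i ∂ν| ≤ ε) :
    prokhorovDist d μ ν ≤ ε := by
  refine prokhorovDist_le_of_mem ⟨hε, fun A _ => ⟨?_, ?_⟩⟩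
  · exact measure_le_measure_thicken_add_of_partition hf hfμ hfν hd hfε A
  · simp only [abs_sub_comm (∫ x, f x _ ∂μ)] at hfε
    exact measure_le_measure_thicken_add_of_partition hf hfν hfμ hd hfε A

end Prokhorov

lemma Pdist_nonneg : ∀ h (α β : M h), 0 ≤ Pdist h α β
  | 0, _, _ => le_rfl
  | _ + 1, _, _ => prokhorovDist_nonneg

lemma Pdist_le_one : ∀ h (α β : M h), Pdist h α β ≤ 1
  | 0, _, _ => zero_le_one
  | _ + 1, α, β => prokhorovDist_le_of_mem <|
    mem_prokhorovRadii_of_measure_univ_le one_pos (by simpa using toMeas_univ_le_one α)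
      (by simpa using toMeas_univ_le_one β)

lemma Pdist_projM_le : ∀ h (α β : M (h + 1)),
    Pdist h (projM h α) (projM h β) ≤ Pdist (h + 1) α β
  | 0, _, _ => Pdist_nonneg _ _ _
  | h + 1, _, _ => prokhorovDist_map_le (continuous_projM_s17 h).measurable (Pdist_projM_le h)

lemma monotone_Pdist (α β : Minf) : Monotone fun h => Pdist h (α.1 h) (β.1 h) := by
  refine monotone_nat_of_le_succ fun h => ?_
  simpa only [α.2 h, β.2 h] using Pdist_projM_le h (α.1 (h + 1)) (β.1 (h + 1))

lemma dPinf_le_max (α β : Minf) (H : ℕ) :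
    dPinf α β ≤ max (Pdist H (α.1 H) (β.1 H)) (1 / (H + 1)) := by
  refine ciSup_le fun h => ?_
  rcases le_or_gt h H with hle | hlt
  · refine le_max_of_le_left ?_
    calc (h : ℝ)⁻¹ * Pdist h (α.1 h) (β.1 h)
        ≤ 1 * Pdist h (α.1 h) (β.1 h) :=
          mul_le_mul_of_nonneg_right (Nat.cast_inv_le_one h) (Pdist_nonneg _ _ _)
      _ ≤ Pdist H (α.1 H) (β.1 H) := (one_mul _).trans_le (monotone_Pdist α β hle)
  · refine le_max_of_le_right ?_
    have H_add_one_le : (H : ℝ) + 1 ≤ h := by exact_mod_cast hlt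
    calc (h : ℝ)⁻¹ * Pdist h (α.1 h) (β.1 h)
        ≤ (H + 1 : ℝ)⁻¹ * 1 := by
          gcongr
          · exact Pdist_nonneg _ _ _
          · exact Pdist_le_one _ _ _
      _ = 1 / (H + 1) := by ring

open scoped NNReal Manifold

lemma exists_lipschitz_partition {E : Type*} [NormedAddCommGroup E] [NormedSpace ℝ E]
    [FiniteDimensional ℝ E] {s : Set E} (hs : IsCompact s) {δ : ℝ} (hδ : 0 < δ) :
    ∃ (k : ℕ) (G : E → EuclideanSpace ℝ (Fin k)), Continuous G ∧
      (∃ K : ℝ≥0, LipschitzOnWith K G s) ∧ (∀ z ∈ s, (G z).ofLp ∈ stdSimplex ℝ (Fin k)) ∧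
      ∀ z z' i, 0 < G z i → 0 < G z' i → dist z z' < δ := by
  obtain ⟨t, -, t_finite, hst⟩ := finite_cover_balls_of_compact hs (half_pos hδ)
  have := t_finite.fintype
  obtain ⟨p, hp⟩ := SmoothPartitionOfUnity.exists_isSubordinate 𝓘(ℝ, E) hs.isClosed
    (fun c : t => Metric.ball (c : E) (δ / 2)) (fun _ => Metric.isOpen_ball)
    (by rwa [iUnion_coe_set])
  let e := (Fintype.equivFin t).symm
  let G (z : E) : EuclideanSpace ℝ (Fin (Fintype.card t)) := WithLp.toLp 2 fun i => p (e i) z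
  have G_contDiff : ContDiff ℝ 1 G := contDiff_euclidean.2 fun i =>
    (p (e i)).contMDiff.contDiff.of_le (by simp)
  refine ⟨_, G, G_contDiff.continuous, ?_, fun z hz => ⟨fun i => p.nonneg _ _, ?_⟩,
    fun z z' i hz hz' => ?_⟩
  · exact G_contDiff.locallyLipschitz.locallyLipschitzOn.exists_lipschitzOnWith_of_compact hs
  · rw [← p.sum_eq_one hz, finsum_eq_sum_of_fintype]
    exact e.sum_comp fun c => p c z
  · have mem_ball (w : E) (hw : 0 < G w i) : w ∈ Metric.ball (e i : E) (δ / 2) :=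
      hp _ (subset_closure hw.ne')
    calc dist z z' ≤ dist z (e i) + dist z' (e i) := dist_triangle_right _ _ _
      _ < δ / 2 + δ / 2 := add_lt_add (mem_ball z hz) (mem_ball z' hz')
      _ = δ := add_halves δ

section Features

lemma integral_euclideanSpace_apply {X ι : Type*} [TopologicalSpace X] [CompactSpace X]
    [MeasurableSpace X] [OpensMeasurableSpace X] [Fintype ι] (μ : Measure X) [IsFiniteMeasure μ]
    {f : X → EuclideanSpace ℝ ι} (hf : Continuous f) (i : ι) :
    (∫ x, f x ∂μ) i = ∫ x, f x i ∂μ :=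
  eval_integral_piLp (fun _ => integrable_of_continuous_of_compactSpace μ (by fun_prop)) i

lemma continuous_integral_toMeas_euclideanSpace {ι : Type*} [Fintype ι] {h : ℕ}
    {f : M h → EuclideanSpace ℝ ι} (hf : Continuous f) :
    Continuous fun α : M (h + 1) => ∫ β, f β ∂(toMeas α) := by
  refine (PiLp.homeomorph 2 fun _ : ι => ℝ).comp_continuous_iff.1 (continuous_pi fun i => ?_)
  change Continuous fun α => (∫ β, f β ∂(toMeas α)) i
  simp only [integral_euclideanSpace_apply _ hf]
  exact continuous_integral_toMeas (by fun_prop)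

variable (m : MPNNModel)

lemma continuous_idmFeat : ∀ t, Continuous (idmFeat m t)
  | 0 => continuous_const
  | t + 1 => (m.cont t).comp (continuous_integral_toMeas_euclideanSpace (continuous_idmFeat t))

lemma graphonFeat_eq_idmFeat_wlMap (W : Graphon) :
    ∀ t x, graphonFeat m W.W t x = idmFeat m t (wlMap W t x)
  | 0, _ => rfl
  | t + 1, x => by
    rw [graphonFeat, idmFeat,
      W.integral_toMeas_wlMap (W.measurable_wlMap t) (continuous_idmFeat m t)]
    simp only [graphonFeat_eq_idmFeat_wlMap W t]

end Features

section PartitioningModels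

lemma euclideanSpace_norm_le_one_of_mem_stdSimplex {ι : Type*} [Fintype ι]
    {z : EuclideanSpace ℝ ι} (hz : z.ofLp ∈ stdSimplex ℝ ι) : ‖z‖ ≤ 1 := by
  rw [← sq_le_one_iff₀ (norm_nonneg z), EuclideanSpace.real_norm_sq_eq, ← hz.2]
  refine Finset.sum_le_sum fun i _ => ?_
  obtain ⟨zero_le, le_one⟩ := mem_Icc_of_mem_stdSimplex hz i
  exact pow_le_of_le_one zero_le le_one two_ne_zero

lemma sum_abs_sub_le_card_mul_dist {ι : Type*} [Fintype ι] (z z' : EuclideanSpace ℝ ι) :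
    ∑ j, |z j - z' j| ≤ Fintype.card ι * dist z z' := by
  rw [← nsmul_eq_mul, ← Finset.card_univ]
  refine Finset.sum_le_card_nsmul _ _ _ fun j _ => ?_
  rw [dist_eq_norm]
  exact PiLp.norm_apply_le (z - z') j

lemma natCast_mul_div_add_one_lt {ε : ℝ} (hε : 0 < ε) (n : ℕ) : n * (ε / (n + 1)) < ε := by
  rw [mul_div_assoc', div_lt_iff₀ (by positivity)]
  linarith

lemma norm_integral_toMeas_le_one {E : Type*} [NormedAddCommGroup E] [NormedSpace ℝ E] {h : ℕ}
    {f : M h → E} (hf : ∀ β, ‖f β‖ ≤ 1) (α : M (h + 1)) : ‖∫ β, f β ∂(toMeas α)‖ ≤ 1 := by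
  refine (norm_integral_le_of_norm_le_const (.of_forall hf)).trans ?_
  rw [one_mul]
  exact ENNReal.toReal_le_of_le_ofReal zero_le_one (by simpa using toMeas_univ_le_one α)

namespace MPNNModel

/-- A model whose layers are Lipschitz partitions of unity of the unit ball, each part of which has
`ℓ¹`-diameter at most `η`. Then the coordinates of every feature map form a partition of unity of
the iterated degree measures into parts that are small in the Prokhorov metric. -/
structure IsPartitioning (m : MPNNModel) (η : ℝ) : Prop where
  init_mem : m.φ₀.ofLp ∈ stdSimplex ℝ (Fin (m.d 0))
  update_mem : ∀ t, ∀ z ∈ Metric.closedBall 0 1, (m.φ t z).ofLp ∈ stdSimplex ℝ (Fin (m.d (t + 1)))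
  lipschitzOn : ∀ t, ∃ K : ℝ≥0, LipschitzOnWith K (m.φ t) (Metric.closedBall 0 1)
  sum_abs_sub_le : ∀ t z z' i, 0 < m.φ t z i → 0 < m.φ t z' i → ∑ j, |z j - z' j| ≤ η

lemma exists_isPartitioning {η : ℝ} (hη : 0 < η) : ∃ m : MPNNModel, m.IsPartitioning η := by
  choose k G continuous lipschitzOn mem_stdSimplex dist_lt using fun d : ℕ =>
    exists_lipschitz_partition (isCompact_closedBall (0 : EuclideanSpace ℝ (Fin d)) 1)
      (δ := η / (d + 1)) (by positivity)
  have sum_abs_sub_le (d : ℕ) (z z' : EuclideanSpace ℝ (Fin d)) (i : Fin (k d))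
      (hz : 0 < G d z i) (hz' : 0 < G d z' i) : ∑ j, |z j - z' j| ≤ η :=
    calc ∑ j, |z j - z' j| ≤ d * dist z z' := by
          simpa only [Fintype.card_fin] using sum_abs_sub_le_card_mul_dist z z'
      _ ≤ d * (η / (d + 1)) :=
          mul_le_mul_of_nonneg_left (dist_lt d z z' i hz hz').le d.cast_nonneg
      _ ≤ η := (natCast_mul_div_add_one_lt hη d).le
  let dim : ℕ → ℕ := Nat.rec 1 fun _ d => k d
  exact ⟨⟨dim, WithLp.toLp 2 fun _ : Fin 1 => 1, fun t => G (dim t), fun t => continuous (dim t)⟩,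
    ⟨fun _ => zero_le_one, Fin.sum_univ_one _⟩, fun t => mem_stdSimplex (dim t),
    fun t => lipschitzOn (dim t), fun t => sum_abs_sub_le (dim t)⟩

namespace IsPartitioning

variable {m : MPNNModel} {η : ℝ}

lemma idmFeat_mem_stdSimplex (hm : m.IsPartitioning η) :
    ∀ t α, (idmFeat m t α).ofLp ∈ stdSimplex ℝ (Fin (m.d t))
  | 0, _ => hm.init_mem
  | t + 1, α => hm.update_mem t _ <| mem_closedBall_zero_iff.2 <|
    norm_integral_toMeas_le_one (fun β =>
      euclideanSpace_norm_le_one_of_mem_stdSimplex (hm.idmFeat_mem_stdSimplex t β)) α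

lemma aggSet_subset_closedBall (hm : m.IsPartitioning η) (t : ℕ) :
    aggSet m t ⊆ Metric.closedBall 0 1 := by
  rintro _ ⟨α, rfl⟩
  exact mem_closedBall_zero_iff.2 <| norm_integral_toMeas_le_one (fun β =>
    euclideanSpace_norm_le_one_of_mem_stdSimplex (hm.idmFeat_mem_stdSimplex t β)) α

lemma Pdist_le (hm : m.IsPartitioning η) (hη : 0 < η) : ∀ t (α β : M t) i,
    0 < idmFeat m t α i → 0 < idmFeat m t β i → Pdist t α β ≤ t * η
  | 0, _, _, _, _, _ => by simp [Pdist]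
  | t + 1, α, β, i, hα, hβ => by
    have continuous_feat := continuous_idmFeat m t
    have integrable_feat (μ : Measure (M t)) [IsFiniteMeasure μ] (j : Fin (m.d t)) :
        Integrable (fun γ => idmFeat m t γ j) μ :=
      integrable_of_continuous_of_compactSpace _ (by fun_prop)
    refine prokhorovDist_le_of_partition (f := fun γ => (idmFeat m t γ).ofLp) (by positivity)
      (hm.idmFeat_mem_stdSimplex t) (integrable_feat _) (integrable_feat _)
      (fun γ γ' j hγ hγ' => (hm.Pdist_le hη t γ γ' j hγ hγ').trans_lt ?_) ?_
    · push_cast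
      linarith
    · simp only [← integral_euclideanSpace_apply _ continuous_feat]
      refine (hm.sum_abs_sub_le t _ _ i hα hβ).trans ?_
      push_cast
      nlinarith [t.cast_nonneg (α := ℝ)]

lemma deltaP_le (hm : m.IsPartitioning η) (hη : 0 < η) {L : ℕ} {ε : ℝ} (hηε : L * η < ε)
    (hLε : 1 / ((L : ℝ) + 1) < ε) {U W : Graphon}
    (hUW : ∑ i, |(∫ x in Icc (0 : ℝ) 1, graphonFeat m U.W L x) i -
      (∫ x in Icc (0 : ℝ) 1, graphonFeat m W.W L x) i| ≤ ε) : deltaP U W ≤ ε := by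
  have continuous_feat : Continuous fun α : Minf => idmFeat m L (α.1 L) :=
    (continuous_idmFeat m L).comp ((continuous_apply L).comp continuous_subtype_val)
  have integrable_feat (V : Graphon) (i) :
      Integrable (fun α : Minf => idmFeat m L (α.1 L) i) (nuW V) :=
    integrable_of_continuous_of_compactSpace _ (by fun_prop)
  refine prokhorovDist_le_of_partition (f := fun α => (idmFeat m L (α.1 L)).ofLp)
    (lt_trans (by positivity) hLε) (fun α => hm.idmFeat_mem_stdSimplex L (α.1 L))
    (integrable_feat U) (integrable_feat W) (fun α β i hα hβ => ?_) ?_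
  · exact (dPinf_le_max α β L).trans_lt <|
      max_lt ((hm.Pdist_le hη L _ _ i hα hβ).trans_lt hηε) hLε
  · simpa only [← integral_euclideanSpace_apply _ continuous_feat,
      Graphon.integral_nuW _ (continuous_idmFeat m L), ← graphonFeat_eq_idmFeat_wlMap] using hUW

end IsPartitioning

end MPNNModel

end PartitioningModels

section Readout

variable {ι κ : Type*} [Fintype κ] [DecidableEq κ]

/-- The readout that sends the `i`-th coordinate to the `j`-th axis; comparing its outputs on two
features compares their `i`-th coordinates. -/
def coordReadout (j : κ) (i : ι) (z : EuclideanSpace ℝ ι) : EuclideanSpace ℝ κ :=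
  EuclideanSpace.single j (z i)

lemma norm_coordReadout_sub (j : κ) (i : ι) (z z' : EuclideanSpace ℝ ι) :
    ‖coordReadout j i z - coordReadout j i z'‖ = |z i - z' i| := by
  rw [← dist_eq_norm, coordReadout, coordReadout, PiLp.dist_single_same, Real.dist_eq]

lemma lipschitzWith_coordReadout [Fintype ι] (j : κ) (i : ι) :
    LipschitzWith 1 (coordReadout j i) :=
  LipschitzWith.of_dist_le_mul fun z z' => by
    rw [dist_eq_norm, norm_coordReadout_sub, NNReal.coe_one, one_mul, dist_eq_norm]
    exact PiLp.norm_apply_le (z - z') i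

end Readout

/-- For every `ε > 0` there are `L ∈ ℕ`, `C > 0` and `δ > 0` such that any two
graphons on which the outputs of all MPNN models with at most `L` layers, Lipschitz
readout into `ℝⁿ`, and Lipschitz constant `C_{(φ,ψ)} ≤ C` differ by at most `δ`
satisfy `δ_P(U,W) ≤ ε`. -/
theorem mpnn_close_implies_deltaP_close (n : ℕ) (hn : 0 < n) (ε : ℝ) (hε : 0 < ε) :
    ∃ (L : ℕ) (C δ : ℝ), 0 < C ∧ 0 < δ ∧
      ∀ U W : Graphon,
        (∀ L' : ℕ, L' ≤ L → ∀ m : MPNNModel,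
          (∀ t, t < L' → ∃ K : NNReal, LipschitzOnWith K (m.φ t) (aggSet m t)) →
          ∀ ψ : EuclideanSpace ℝ (Fin (m.d L')) → EuclideanSpace ℝ (Fin n),
            (∃ K : NNReal, LipschitzOnWith K ψ (probAgg m L')) →
            Cpair m L' ψ ≤ C →
            ‖ψ (∫ x in Set.Icc (0:ℝ) 1, graphonFeat m U.W L' x) -
                ψ (∫ x in Set.Icc (0:ℝ) 1, graphonFeat m W.W L' x)‖ ≤ δ) →
        deltaP U W ≤ ε := by
  obtain ⟨L, hL⟩ := exists_nat_one_div_lt hε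
  have hη : 0 < ε / (L + 1) := by positivity
  obtain ⟨m, hm⟩ := MPNNModel.exists_isPartitioning hη
  obtain ⟨C, hC⟩ := Finite.exists_le fun i => Cpair m L (coordReadout (⟨0, hn⟩ : Fin n) i)
  refine ⟨L, max 1 C, ε / (m.d L + 1), by positivity, by positivity, fun U W hUW => ?_⟩
  have coord_close (i : Fin (m.d L)) : |(∫ x in Icc (0 : ℝ) 1, graphonFeat m U.W L x) i -
      (∫ x in Icc (0 : ℝ) 1, graphonFeat m W.W L x) i| ≤ ε / (m.d L + 1) := by
    rw [← norm_coordReadout_sub (⟨0, hn⟩ : Fin n)]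
    refine hUW L le_rfl m (fun t _ => ?_) _ ⟨1, (lipschitzWith_coordReadout _ i).lipschitzOnWith⟩
      ((hC i).trans (le_max_right 1 C))
    exact (hm.lipschitzOn t).imp fun _ hK => hK.mono (hm.aggSet_subset_closedBall t)
  refine hm.deltaP_le hη (natCast_mul_div_add_one_lt hε L) hL ?_
  refine (Finset.sum_le_card_nsmul _ _ _ fun i _ => coord_close i).trans ?_
  rw [Finset.card_fin, nsmul_eq_mul]
  exact (natCast_mul_div_add_one_lt hε _).le

end
end
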